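/- For all μ ∈ [0, 1) and all a ≥ 1, [−2 + 5μ² + a³μ³ − 4μ⁴ + 2μ⁶ + a²μ²(5 − 6μ²) + aμ(2 − 7μ² + 4μ⁴)] · exp(aμ/(1 − μ²)) − [−2 + 5μ² − a³μ³ − 4μ⁴ + 2μ⁶ + a²μ²(5 − 6μ²) − aμ(2 − 7μ² + 4μ⁴)] · exp(−aμ/(1 − μ²)) ≥ 0. -/

import Mathlib

/-!
Put `m = 1 - μ²`, `x = aμ / m` and `d = (aμ)² - (1 - m) = (a² - 1)μ² ≥ 0`. Half of the left-hand
side is `A sinh x + B · (m x cosh x)` with `A` and `B` affine in `d`. Comparing `m x cosh x` with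
a multiple `k sinh x`, from below if `B ≥ 0` and from above if `B < 0`, reduces the claim to the
polynomial inequality `A + k B ≥ 0`. Three multiples suffice: `k = 2` from above, and `k = 1 - m`
(for `m ≤ 1/2`) and `k = m` (for `m ≥ 1/2`) from below.
-/

open Real

namespace BiasVariance

theorem monotone_mul_cosh_sub_sinh : Monotone fun y : ℝ ↦ y * cosh y - sinh y := by
  have hderiv (y : ℝ) : HasDerivAt (fun y : ℝ ↦ y * cosh y - sinh y) (y * sinh y) y :=
    (((hasDerivAt_id y).mul (hasDerivAt_cosh y)).sub (hasDerivAt_sinh y)).congr_deriv (by simp)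
  refine monotone_of_hasDerivAt_nonneg hderiv fun y ↦ ?_
  rcases le_total 0 y with hy | hy
  · exact mul_nonneg hy (sinh_nonneg_iff.2 hy)
  · exact mul_nonneg_of_nonpos_of_nonpos hy (sinh_nonpos_iff.2 hy)

theorem sinh_le_mul_cosh {x : ℝ} (hx : 0 ≤ x) : sinh x ≤ x * cosh x := by
  simpa using monotone_mul_cosh_sub_sinh hx

theorem mul_cosh_le_one_add_mul_sinh (x : ℝ) : x * cosh x ≤ (1 + x) * sinh x := by
  have hexp : x * exp (-x) ≤ sinh x :=
    calc x * exp (-x) ≤ (exp (2 * x) - 1) / 2 * exp (-x) := by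
          gcongr
          linarith [add_one_le_exp (2 * x)]
      _ = sinh x := by
          rw [sinh_eq, two_mul, exp_add, exp_neg]
          field_simp
  rw [← cosh_sub_sinh] at hexp
  linarith

section Coefficients

variable {m d : ℝ}

/-- The coefficient of `sinh x` in half of the left-hand side, as a function of `m = 1 - μ²` and
of the excess `d = (aμ)² - (1 - m)`, which vanishes at `a = 1`. -/
def sinhCoeff (m d : ℝ) : ℝ := 2 * m * (2 - 2 * m - m ^ 2) + (6 * m - 1) * d

/-- The coefficient of `aμ cosh x` in half of the left-hand side, in the same variables as
`sinhCoeff`. -/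
def coshCoeff (m d : ℝ) : ℝ := d - 2 * m * (1 - 2 * m)

theorem sinhCoeff_add_two_mul_coshCoeff_nonneg (hm₀ : 0 ≤ m) (hm₂ : m ≤ 2) (hd : 0 ≤ d) :
    0 ≤ sinhCoeff m d + 2 * coshCoeff m d :=
  calc 0 ≤ 2 * m ^ 2 * (2 - m) + (6 * m + 1) * d := by
        have : 0 ≤ 2 - m := sub_nonneg.2 hm₂
        positivity
    _ = sinhCoeff m d + 2 * coshCoeff m d := by
        unfold sinhCoeff coshCoeff
        ring

theorem sinhCoeff_add_one_sub_mul_coshCoeff_nonneg (hm₀ : 0 ≤ m) (hm : m ≤ 3 / 4) (hd : 0 ≤ d) :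
    0 ≤ sinhCoeff m d + (1 - m) * coshCoeff m d :=
  calc 0 ≤ 2 * m * (1 + m * (1 - 3 * m)) + 5 * m * d := by
        have : 0 ≤ 1 + m * (1 - 3 * m) := by nlinarith [mul_nonneg hm₀ (sub_nonneg.2 hm)]
        positivity
    _ = sinhCoeff m d + (1 - m) * coshCoeff m d := by
        unfold sinhCoeff coshCoeff
        ring

theorem sinhCoeff_add_self_mul_coshCoeff_nonneg (hm : 1 / 7 ≤ m) (hm₁ : m ≤ 1) (hd : 0 ≤ d) :
    0 ≤ sinhCoeff m d + m * coshCoeff m d :=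
  calc 0 ≤ 2 * m * ((1 - m) * (2 - m)) + (7 * m - 1) * d := by
        have : 0 ≤ m := by linarith
        have : 0 ≤ 1 - m := by linarith
        have : 0 ≤ 2 - m := by linarith
        have : 0 ≤ 7 * m - 1 := by linarith
        positivity
    _ = sinhCoeff m d + m * coshCoeff m d := by
        unfold sinhCoeff coshCoeff
        ring

theorem add_le_two_of_coshCoeff_neg {t : ℝ} (ht : t ^ 2 = 1 - m + d) (hneg : coshCoeff m d < 0) :
    m + t ≤ 2 := by
  have hsq_lt : t ^ 2 < 1 + m - 4 * m ^ 2 := by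
    unfold coshCoeff at hneg
    linarith
  have hsq : t ^ 2 ≤ (2 - m) ^ 2 := by nlinarith [sq_nonneg (2 * m - 1)]
  have hm : m ≤ 2 := by nlinarith [sq_nonneg t]
  linarith [le_of_sq_le_sq hsq (sub_nonneg.2 hm)]

end Coefficients

section Comparison

variable {m x : ℝ}

theorem mul_mul_cosh_le_mul_sinh (hm₀ : 0 ≤ m) (hx₀ : 0 ≤ x) {c : ℝ} (hc : m + m * x ≤ c) :
    m * x * cosh x ≤ c * sinh x :=
  calc m * x * cosh x = m * (x * cosh x) := mul_assoc ..
    _ ≤ m * ((1 + x) * sinh x) :=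
        mul_le_mul_of_nonneg_left (mul_cosh_le_one_add_mul_sinh x) hm₀
    _ = (m + m * x) * sinh x := by ring
    _ ≤ c * sinh x := mul_le_mul_of_nonneg_right hc (sinh_nonneg_iff.2 hx₀)

theorem one_sub_mul_sinh_le_mul_mul_cosh (hm₀ : 0 ≤ m) (hm₁ : m ≤ 1) (hx₀ : 0 ≤ x)
    (hx : 1 - m ≤ (m * x) ^ 2) : (1 - m) * sinh x ≤ m * x * cosh x := by
  have hsq : (1 - m) ^ 2 ≤ (m * x) ^ 2 :=
    (pow_le_of_le_one (sub_nonneg.2 hm₁) (sub_le_self 1 hm₀) two_ne_zero).trans hx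
  have hmx : 1 - m ≤ m * x := le_of_sq_le_sq hsq (by positivity)
  exact mul_le_mul hmx (sinh_lt_cosh x).le (sinh_nonneg_iff.2 hx₀) (by positivity)

theorem mul_sinh_le_mul_mul_cosh (hm₀ : 0 ≤ m) (hx₀ : 0 ≤ x) :
    m * sinh x ≤ m * x * cosh x := by
  rw [mul_assoc]
  gcongr
  exact sinh_le_mul_cosh hx₀

theorem sinhCoeff_mul_sinh_add_coshCoeff_mul_cosh_nonneg {d : ℝ} (hm₀ : 0 ≤ m)
    (hm₁ : m ≤ 1) (hd : 0 ≤ d) (hx₀ : 0 ≤ x) (hx : (m * x) ^ 2 = 1 - m + d) :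
    0 ≤ sinhCoeff m d * sinh x + coshCoeff m d * (m * x * cosh x) := by
  obtain ⟨k, hcoeff, hcosh⟩ : ∃ k, 0 ≤ sinhCoeff m d + k * coshCoeff m d ∧
      coshCoeff m d * (k * sinh x) ≤ coshCoeff m d * (m * x * cosh x) := by
    rcases lt_or_ge (coshCoeff m d) 0 with hneg | hnonneg
    · exact ⟨2, sinhCoeff_add_two_mul_coshCoeff_nonneg hm₀ (by linarith) hd,
        mul_le_mul_of_nonpos_left
          (mul_mul_cosh_le_mul_sinh hm₀ hx₀ (add_le_two_of_coshCoeff_neg hx hneg)) hneg.le⟩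
    rcases le_total m (1 / 2) with hm | hm
    · exact ⟨1 - m, sinhCoeff_add_one_sub_mul_coshCoeff_nonneg hm₀ (by linarith) hd,
        mul_le_mul_of_nonneg_left
          (one_sub_mul_sinh_le_mul_mul_cosh hm₀ hm₁ hx₀ (by linarith)) hnonneg⟩
    · exact ⟨m, sinhCoeff_add_self_mul_coshCoeff_nonneg (by linarith) hm₁ hd,
        mul_le_mul_of_nonneg_left (mul_sinh_le_mul_mul_cosh hm₀ hx₀) hnonneg⟩
  calc 0 ≤ (sinhCoeff m d + k * coshCoeff m d) * sinh x :=
        mul_nonneg hcoeff (sinh_nonneg_iff.2 hx₀)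
    _ = sinhCoeff m d * sinh x + coshCoeff m d * (k * sinh x) := by ring
    _ ≤ sinhCoeff m d * sinh x + coshCoeff m d * (m * x * cosh x) := by gcongr

end Comparison

end BiasVariance

theorem derivative_inequality_second_level (μ a : ℝ) (hμ0 : 0 ≤ μ) (hμ1 : μ < 1) (ha : 1 ≤ a) :
    (-2 + 5*μ^2 + a^3*μ^3 - 4*μ^4 + 2*μ^6 + a^2*μ^2*(5 - 6*μ^2) + a*μ*(2 - 7*μ^2 + 4*μ^4))
        * Real.exp (a*μ/(1 - μ^2))
      - (-2 + 5*μ^2 - a^3*μ^3 - 4*μ^4 + 2*μ^6 + a^2*μ^2*(5 - 6*μ^2) - a*μ*(2 - 7*μ^2 + 4*μ^4))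
        * Real.exp (-(a*μ)/(1 - μ^2)) ≥ 0 := by
  have hm₀ : 0 < 1 - μ ^ 2 := sub_pos.2 (pow_lt_one₀ hμ0 hμ1 two_ne_zero)
  have hm₁ : 1 - μ ^ 2 ≤ 1 := sub_le_self 1 (sq_nonneg μ)
  have hd : 0 ≤ (a ^ 2 - 1) * μ ^ 2 :=
    mul_nonneg (sub_nonneg.2 (one_le_pow₀ ha)) (sq_nonneg μ)
  have hx₀ : 0 ≤ a * μ / (1 - μ ^ 2) := by positivity
  have hmx : (1 - μ ^ 2) * (a * μ / (1 - μ ^ 2)) = a * μ := mul_div_cancel₀ _ hm₀.ne'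
  have h := BiasVariance.sinhCoeff_mul_sinh_add_coshCoeff_mul_cosh_nonneg hm₀.le hm₁ hd hx₀
    (by rw [hmx]; ring)
  rw [hmx, sinh_eq, cosh_eq, ← neg_div] at h
  unfold BiasVariance.sinhCoeff BiasVariance.coshCoeff at h
  linarith
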